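/- arXiv:2304.07419 — 6 statements merged into one kernel-verified Lean document; each statement's English description precedes it below -/
import Mathlib

section
/- Let X be a path-connected topological space, k ≥ 2, and A ⊆ X^k a subset. If the inclusion A ↪ X^k is homotopic to a continuous map taking values in the diagonal Δ(X) = {(x, x, ..., x) : x ∈ X} ⊆ X^k, then there is a continuous map s : A → C([0,1],X) with π_k ∘ s equal to the inclusion A ↪ X^k; in particular TC_{k,X}(A) = 1. -/
/-!
A homotopy `F` from the inclusion `A ↪ X^k` to a map `f` with values in the diagonal provides, for
each `a ∈ A`, paths `t ↦ F (t, a) i` from `a i` to a point `c a` independent of `i`. The section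
sends `a` to the path that visits `a 0, …, a (k - 1)` in turn and passes through `c a` between two
consecutive ones: at the time `s`, with `u = s (k - 1)` and `i` an integer nearest to `u`, it stands
at `F (2 |u - i|, a) i`. The choice of `i` is ambiguous only for `u` a half-integer, where the value
is `c a` for either choice, so the pieces glue to a continuous map on `A × [0,1]`, which is curried.
-/

open scoped unitInterval

/-- The map `π_k : C([0,1],X) → X^k`, `γ ↦ (γ(0), γ(1/(k-1)), …, γ(1))`. -/
noncomputable def pik {X : Type*} [TopologicalSpace X] (k : ℕ) (γ : C(unitInterval, X)) :
    Fin k → X :=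
  fun i => γ (Set.projIcc 0 1 zero_le_one ((i : ℝ) / ((k : ℝ) - 1)))

/-- The restriction of `π_k` over `S ⊆ X^k` admits a continuous section. -/
def HasSec {X : Type*} [TopologicalSpace X] (k : ℕ) (S : Set (Fin k → X)) : Prop :=
  ∃ s : C(S, C(unitInterval, X)), ∀ u : S, pik k (s u) = (u : Fin k → X)

/-- The inclusion of `U` into `Z` is null-homotopic. -/
def NullHomotopicIncl {Z : Type*} [TopologicalSpace Z] (U : Set Z) : Prop :=
  ∃ z : Z, ContinuousMap.Homotopic ⟨Subtype.val, continuous_subtype_val⟩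
    (ContinuousMap.const ↥U z)

/-- `X^k` can be covered by `r` open sets, each admitting a continuous section of `π_k`. -/
def TCCoverAt (X : Type*) [TopologicalSpace X] (k r : ℕ) : Prop :=
  ∃ U : Fin r → Set (Fin k → X),
    (∀ i, IsOpen (U i)) ∧ (⋃ i, U i) = Set.univ ∧ ∀ i, HasSec k (U i)

/-- The higher (sequential) topological complexity `TC_k(X)`. -/
noncomputable def higherTC (X : Type*) [TopologicalSpace X] (k : ℕ) : ℕ :=
  sInf {r | TCCoverAt X k r}

/-- A Hurewicz fibration: homotopy lifting property with respect to every space. -/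
def IsHurewiczFibration.{u} {E B : Type*} [TopologicalSpace E] [TopologicalSpace B]
    (p : C(E, B)) : Prop :=
  ∀ (Z : Type u) [TopologicalSpace Z] (f : C(Z, E)) (H : C(Z × unitInterval, B)),
    (∀ z, H (z, 0) = p (f z)) →
    ∃ G : C(Z × unitInterval, E), (∀ z, G (z, 0) = f z) ∧ ∀ z t, p (G (z, t)) = H (z, t)

/-- Every time `s ∈ [0,1]`, rescaled to `[0, k - 1]`, is within `1 / 2` of some index. -/
lemma exists_near_index (k : ℕ) (hk : 2 ≤ k) (s : unitInterval) :
    ∃ i : Fin k, |(s : ℝ) * ((k : ℝ) - 1) - (i : ℝ)| ≤ 1 / 2 := by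
  have hk' : (2 : ℝ) ≤ k := by exact_mod_cast hk
  have h0 : 0 ≤ (s : ℝ) * ((k : ℝ) - 1) := mul_nonneg s.2.1 (by linarith)
  have h1 : (s : ℝ) * ((k : ℝ) - 1) ≤ (k : ℝ) - 1 :=
    mul_le_of_le_one_left (by linarith) s.2.2
  have h2 := Nat.floor_le (show 0 ≤ (s : ℝ) * ((k : ℝ) - 1) + 1 / 2 by linarith)
  have h3 := Nat.lt_floor_add_one ((s : ℝ) * ((k : ℝ) - 1) + 1 / 2)
  refine ⟨⟨⌊(s : ℝ) * ((k : ℝ) - 1) + 1 / 2⌋₊, ?_⟩, ?_⟩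
  · rw [Nat.floor_lt (by linarith)]
    linarith
  · rw [abs_le]
    constructor <;> simp only <;> linarith

/-- If two distinct indices are within `1 / 2` of `u`, then `u` is the midpoint between them. -/
lemma half_le_of_near {k : ℕ} {u : ℝ} {i j : Fin k} (hij : i ≠ j)
    (hi : |u - (i : ℝ)| ≤ 1 / 2) (hj : |u - (j : ℝ)| ≤ 1 / 2) :
    1 ≤ 2 * |u - (i : ℝ)| ∧ 1 ≤ 2 * |u - (j : ℝ)| := by
  have hne : ((i : ℕ) : ℤ) - (j : ℕ) ≠ 0 := by
    have := Fin.val_ne_of_ne hij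
    omega
  have h1 : (1 : ℝ) ≤ |(i : ℝ) - (j : ℝ)| := by
    exact_mod_cast Int.one_le_abs hne
  have h2 := abs_sub_le (i : ℝ) u (j : ℝ)
  rw [abs_sub_comm (i : ℝ) u] at h2
  constructor <;> linarith

/-- If the inclusion `A ↪ X^k` is homotopic to a continuous map taking values in the
diagonal, then the restriction of `π_k` over `A` admits a continuous section. -/
theorem stmt2 {X : Type*} [TopologicalSpace X] [PathConnectedSpace X]
    (k : ℕ) (hk : 2 ≤ k) (A : Set (Fin k → X))
    (f : C(A, Fin k → X)) (hdiag : ∀ a : A, ∀ i j : Fin k, f a i = f a j)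
    (hhom : ContinuousMap.Homotopic
      (⟨Subtype.val, continuous_subtype_val⟩ : C(A, Fin k → X)) f) :
    HasSec k A := by
  obtain ⟨F⟩ := hhom
  have hk' : (2 : ℝ) ≤ k := by exact_mod_cast hk
  choose idx hidx using exists_near_index k hk
  let τ : Fin k → unitInterval → unitInterval := fun i s =>
    Set.projIcc 0 1 zero_le_one (2 * |(s : ℝ) * ((k : ℝ) - 1) - (i : ℝ)|)
  have hτ : ∀ i, Continuous (τ i) := fun i => continuous_projIcc.comp (by fun_prop)
  -- The leg from `a i` (at `u = i`) to the common point (at `|u - i| ≥ 1 / 2`, by clamping).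
  let h : Fin k → A × unitInterval → X := fun i p => F (τ i p.2, p.1) i
  have hh : ∀ i, Continuous (h i) := fun i =>
    (continuous_apply i).comp
      (F.continuous.comp (((hτ i).comp continuous_snd).prodMk continuous_fst))
  let C : Fin k → Set (A × unitInterval) := fun i =>
    {p | |(p.2 : ℝ) * ((k : ℝ) - 1) - (i : ℝ)| ≤ 1 / 2}
  let G : A × unitInterval → X := fun p => h (idx p.2) p
  have hGC : ∀ i, Set.EqOn G (h i) (C i) := by
    intro i p hp
    by_cases hij : idx p.2 = i
    · simp only [G, hij]
    · obtain ⟨h1, h2⟩ := half_le_of_near hij (hidx p.2) hp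
      simp only [G, h, τ]
      rw [Set.projIcc_of_right_le _ h1, Set.projIcc_of_right_le _ h2]
      exact (congrFun (F.apply_one p.1) _).trans
        ((hdiag p.1 _ _).trans (congrFun (F.apply_one p.1) _).symm)
  have hG : Continuous G := by
    refine (locallyFinite_of_finite C).continuous ?_ ?_ ?_
    · exact Set.eq_univ_of_forall fun p => Set.mem_iUnion.2 ⟨idx p.2, hidx p.2⟩
    · exact fun i => isClosed_le (by fun_prop) continuous_const
    · exact fun i => (hh i).continuousOn.congr (hGC i)
  refine ⟨ContinuousMap.curry ⟨G, hG⟩, fun a => funext fun i => ?_⟩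
  have hpos : (0 : ℝ) < (k : ℝ) - 1 := by linarith
  have hi : (i : ℝ) + 1 ≤ k := by exact_mod_cast i.2
  have hmem : (i : ℝ) / ((k : ℝ) - 1) ∈ Set.Icc (0 : ℝ) 1 :=
    ⟨by positivity, (div_le_one hpos).2 (by linarith)⟩
  have hz : (i : ℝ) / ((k : ℝ) - 1) * ((k : ℝ) - 1) - (i : ℝ) = 0 := by
    rw [div_mul_cancel₀ _ hpos.ne', sub_self]
  change G (a, Set.projIcc 0 1 zero_le_one ((i : ℝ) / ((k : ℝ) - 1))) = _
  rw [Set.projIcc_of_mem _ hmem]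
  have hC : ((a, ⟨_, hmem⟩) : A × unitInterval) ∈ C i := by
    simp [C, hz]
  rw [hGC i hC]
  simp only [h, τ, hz, abs_zero, mul_zero]
  rw [Set.projIcc_left]
  exact congrFun (F.apply_zero a) i
end

section
/- Let X be a path-connected topological space, k ≥ 2, and A ⊆ X a subset. Then TC_{k,X}(A^k) ≤ cat_{X^k}(A^k): if A^k ⊆ X^k can be covered by r sets that are open in A^k, each of whose inclusions into X^k is null-homotopic, then A^k can be covered by r sets that are open in A^k, each admitting a continuous section of π_k. -/
/-!
The given cover itself works: each `U` with null-homotopic inclusion into `X^k` admits a section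
of `π_k`. Since `X` is path-connected, the coordinates of a null-homotopy can be prolonged to end
at one common point `x₀`, giving for every `u ∈ U` and every `i` a path `F i u` from `x₀` to `u i`
that depends continuously on `u`. Now send `u` to the path which, on the interval of radius
`1/(2(k-1))` around `i/(k-1)`, runs along `F i u` from `x₀` to `u i` and back. Neighbouring pieces
meet at midpoints, where both are at `x₀`, so the pieces glue over a finite closed cover of
`U × [0,1]`.
-/

open scoped unitInterval

/-- The coordinates of a null-homotopic inclusion into `X^k` are all homotopic to one and the same
constant map. -/
lemma exists_homotopic_const {X : Type*} [TopologicalSpace X] [PathConnectedSpace X]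
    {k : ℕ} {U : Set (Fin k → X)} (h : NullHomotopicIncl U) :
    ∃ x₀ : X, ∀ i, ContinuousMap.Homotopic (ContinuousMap.const U x₀)
      ⟨fun u : U => (u : Fin k → X) i, (continuous_apply i).comp continuous_subtype_val⟩ := by
  obtain ⟨z, hz⟩ := h
  obtain ⟨x₀⟩ : Nonempty X := inferInstance
  refine ⟨x₀, fun i => ?_⟩
  have h1 : ContinuousMap.Homotopic (ContinuousMap.const U x₀) (ContinuousMap.const U (z i)) := by
    obtain ⟨p⟩ := PathConnectedSpace.joined x₀ (z i)
    exact ⟨{ toFun := fun q => p q.1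
             continuous_toFun := by fun_prop
             map_zero_left := by simp
             map_one_left := by simp }⟩
  have h2 := (ContinuousMap.Homotopic.refl
    (⟨fun x : Fin k → X => x i, continuous_apply i⟩ : C(Fin k → X, X))).comp hz
  exact h1.trans h2.symm

/-- Every point of `[0, k-1]` is within `1/2` of one of the integers `0, …, k-1`. -/
lemma exists_near (k : ℕ) (hk : 2 ≤ k) (t : unitInterval) :
    ∃ i : Fin k, |(t : ℝ) * ((k : ℝ) - 1) - i| ≤ 1 / 2 := by
  have hk' : (2 : ℝ) ≤ k := by exact_mod_cast hk
  have h0 : 0 ≤ (t : ℝ) * ((k : ℝ) - 1) := mul_nonneg t.2.1 (by linarith)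
  have h1 : (t : ℝ) * ((k : ℝ) - 1) ≤ (k : ℝ) - 1 :=
    mul_le_of_le_one_left (by linarith) t.2.2
  have hf := Nat.floor_le (a := (t : ℝ) * ((k : ℝ) - 1) + 1 / 2) (by linarith)
  have hl := Nat.lt_floor_add_one ((t : ℝ) * ((k : ℝ) - 1) + 1 / 2)
  have hlt : ⌊(t : ℝ) * ((k : ℝ) - 1) + 1 / 2⌋₊ < k := by
    have : (⌊(t : ℝ) * ((k : ℝ) - 1) + 1 / 2⌋₊ : ℝ) < k := by linarith
    exact_mod_cast this
  refine ⟨⟨_, hlt⟩, abs_le.2 ⟨?_, ?_⟩⟩ <;> dsimp only <;> linarith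

/-- A real within `1/2` of a natural `j` is at distance at least `1/2` from every other natural. -/
lemma half_le_of_near_s3 {s : ℝ} {i j : ℕ} (hij : i ≠ j) (hj : |s - j| ≤ 1 / 2) :
    1 / 2 ≤ |s - i| := by
  have h1 : (1 : ℝ) ≤ |(i : ℝ) - j| := by
    have : (1 : ℤ) ≤ |(i : ℤ) - j| := Int.one_le_abs (by omega)
    exact_mod_cast this
  have h2 : |(i : ℝ) - j| ≤ |s - i| + |s - j| := by
    have := abs_sub_le (i : ℝ) s j
    rwa [abs_sub_comm (i : ℝ) s] at this
  linarith

lemma hasSec_of_nullHomotopicIncl {X : Type*} [TopologicalSpace X] [PathConnectedSpace X]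
    {k : ℕ} (hk : 2 ≤ k) {U : Set (Fin k → X)} (h : NullHomotopicIncl U) : HasSec k U := by
  have hk' : (2 : ℝ) ≤ k := by exact_mod_cast hk
  obtain ⟨x₀, hx₀⟩ := exists_homotopic_const h
  have F := fun i => (hx₀ i).some
  choose idx hidx using exists_near k hk
  -- `f i` traverses `F i` forth and back around `i/(k-1)`, and rests at `x₀` elsewhere.
  let f : Fin k → U × unitInterval → X := fun i q =>
    F i (Set.projIcc 0 1 zero_le_one (1 - 2 * |(q.2 : ℝ) * ((k : ℝ) - 1) - i|), q.1)
  have hfc : ∀ i, Continuous (f i) := fun i =>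
    (F i).continuous.comp ((continuous_projIcc.comp (by fun_prop)).prodMk continuous_fst)
  have hf0 : ∀ i q, 1 / 2 ≤ |(q.2 : ℝ) * ((k : ℝ) - 1) - (i : Fin k)| → f i q = x₀ := by
    intro i q hq
    simp only [f]
    rw [Set.projIcc_of_le_left _ (by linarith)]
    exact (F i).map_zero_left q.1
  have heq : ∀ i (q : U × unitInterval), |(q.2 : ℝ) * ((k : ℝ) - 1) - (i : Fin k)| ≤ 1 / 2 →
      f (idx q.2) q = f i q := by
    intro i q hq
    by_cases hi : idx q.2 = i
    · rw [hi]
    · have hi' : (idx q.2 : ℕ) ≠ i := fun h => hi (Fin.ext h)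
      rw [hf0 _ q (half_le_of_near_s3 hi' hq), hf0 _ q (half_le_of_near_s3 hi'.symm (hidx q.2))]
  have hg : Continuous fun q : U × unitInterval => f (idx q.2) q := by
    refine (locallyFinite_of_finite fun i : Fin k =>
      {q : U × unitInterval | |(q.2 : ℝ) * ((k : ℝ) - 1) - i| ≤ 1 / 2}).continuous ?_ ?_ ?_
    · exact Set.iUnion_eq_univ_iff.2 fun q => ⟨idx q.2, hidx q.2⟩
    · exact fun i => isClosed_le (by fun_prop) continuous_const
    · exact fun i => (hfc i).continuousOn.congr fun q hq => heq i q hq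
  refine ⟨ContinuousMap.curry ⟨_, hg⟩, fun u => funext fun i => ?_⟩
  have hi : (i : ℝ) ≤ (k : ℝ) - 1 := by
    have : (i : ℝ) + 1 ≤ k := by exact_mod_cast i.2
    linarith
  have hmem : (i : ℝ) / ((k : ℝ) - 1) ∈ Set.Icc (0 : ℝ) 1 :=
    ⟨div_nonneg (Nat.cast_nonneg _) (by linarith), div_le_one_of_le₀ hi (by linarith)⟩
  have hz : (i : ℝ) / ((k : ℝ) - 1) * ((k : ℝ) - 1) - i = 0 := by
    rw [div_mul_cancel₀ _ (by linarith), sub_self]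
  simp only [pik, ContinuousMap.curry_apply, ContinuousMap.coe_mk]
  rw [Set.projIcc_of_mem _ hmem, heq i (u, ⟨_, hmem⟩) (by simp only [hz]; norm_num)]
  simp only [f, hz, abs_zero, mul_zero, sub_zero, Set.projIcc_right]
  exact (F i).map_one_left u

/-- `TC_{k,X}(A^k) ≤ cat_{X^k}(A^k)`: a cover of `A^k` by relatively open sets whose
inclusions into `X^k` are null-homotopic yields a cover of the same size by relatively
open sets admitting continuous sections of `π_k`. -/
theorem stmt3 {X : Type*} [TopologicalSpace X] [PathConnectedSpace X]
    (k : ℕ) (hk : 2 ≤ k) (A : Set X) (r : ℕ)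
    (U : Fin r → Set (Fin k → X))
    (hrel : ∀ i, ∃ V, IsOpen V ∧ U i = {x : Fin k → X | ∀ j, x j ∈ A} ∩ V)
    (hcov : {x : Fin k → X | ∀ j, x j ∈ A} ⊆ ⋃ i, U i)
    (hnull : ∀ i, NullHomotopicIncl (U i)) :
    ∃ W : Fin r → Set (Fin k → X),
      (∀ i, ∃ V, IsOpen V ∧ W i = {x : Fin k → X | ∀ j, x j ∈ A} ∩ V) ∧
      {x : Fin k → X | ∀ j, x j ∈ A} ⊆ (⋃ i, W i) ∧ ∀ i, HasSec k (W i) := by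
  exact ⟨U, hrel, hcov, fun i => hasSec_of_nullHomotopicIncl hk (hnull i)⟩
end

section
/- Let X be a path-connected topological space, k ≥ 2, and A ⊆ X a nonempty subset. Then cat_{X^{k-1}}(A^{k-1}) ≤ TC_{k,X}(A^k): if A^k ⊆ X^k can be covered by r sets that are open in A^k, each admitting a continuous section of π_k, then A^{k-1} ⊆ X^{k-1} can be covered by r sets that are open in A^{k-1}, each of whose inclusions into X^{k-1} is null-homotopic. -/
/-!
Fix a point `a ∈ A` and embed `X^n` in `X^{n+1}` as the slice `y ↦ (a, y)`, where `n = k - 1`.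
The sets covering `A^n` are the preimages of the given sets under this embedding. A section `s`
of `π_k` over `U` assigns to each such `y` a path `γ_y = s (a, y)` that starts at `a` and is at
`y_j` at time `(j + 1) / n`. Running every coordinate back along `γ_y`, namely
`(t, y) ↦ (γ_y ((1 - t) (j + 1) / n))_j`, contracts the preimage of `U` to the point `(a, …, a)`
within `X^n`; this is `nullHomotopicIncl_preimage_cons`. Joint continuity uses only that the unit
interval is locally compact, so that evaluation `C(I, X) × I → X` is continuous.
-/

open scoped unitInterval

/-- The parameter `i / (k - 1)` at which `pik k` evaluates its `i`-th coordinate. -/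
noncomputable def pikTime (k : ℕ) (i : Fin k) : unitInterval :=
  Set.projIcc 0 1 zero_le_one ((i : ℝ) / ((k : ℝ) - 1))

theorem pikTime_zero (n : ℕ) : pikTime (n + 1) 0 = 0 := by
  simp [pikTime, Set.projIcc_left]

/-- The slice of `U` over a fixed first coordinate `a` contracts in `X^n`: coordinate `j` moves
back to `a` along the path that the section provides. -/
theorem nullHomotopicIncl_preimage_cons {X : Type*} [TopologicalSpace X] {n : ℕ} (a : X)
    (U : Set (Fin (n + 1) → X)) (hU : HasSec (n + 1) U) :
    NullHomotopicIncl {y : Fin n → X | (Fin.cons a y : Fin (n + 1) → X) ∈ U} := by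
  obtain ⟨s, hs⟩ := hU
  have hs' : ∀ (u : U) (i : Fin (n + 1)), s u (pikTime (n + 1) i) = (u : Fin (n + 1) → X) i :=
    fun u i => congrFun (hs u) i
  let φ : {y : Fin n → X | (Fin.cons a y : Fin (n + 1) → X) ∈ U} → U :=
    fun y => ⟨Fin.cons a y.1, y.2⟩
  have hφ : Continuous φ := by
    refine Continuous.subtype_mk (continuous_pi fun i => ?_) _
    refine Fin.cases ?_ (fun j => ?_) i
    · simpa using continuous_const
    · exact (continuous_apply j).comp continuous_subtype_val
  refine ⟨fun _ => a, ⟨{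
    toFun := fun p j => s (φ p.2) (unitInterval.symm p.1 * pikTime (n + 1) j.succ)
    continuous_toFun := ?_
    map_zero_left := fun y => ?_
    map_one_left := fun y => ?_ }⟩⟩
  · fun_prop
  · funext j
    simp [hs', φ]
  · funext j
    have h := hs' (φ y) 0
    rw [pikTime_zero] at h
    simp [h, φ, ContinuousMap.const]

/-- `cat_{X^{k-1}}(A^{k-1}) ≤ TC_{k,X}(A^k)`: a cover of `A^k` by relatively open sets
admitting continuous sections of `π_k` yields a cover of `A^{k-1}` of the same size by
relatively open sets whose inclusions into `X^{k-1}` are null-homotopic. -/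
theorem stmt4 {X : Type*} [TopologicalSpace X] [PathConnectedSpace X]
    (k : ℕ) (hk : 2 ≤ k) (A : Set X) (hA : A.Nonempty) (r : ℕ)
    (U : Fin r → Set (Fin k → X))
    (hrel : ∀ i, ∃ V, IsOpen V ∧ U i = {x : Fin k → X | ∀ j, x j ∈ A} ∩ V)
    (hcov : {x : Fin k → X | ∀ j, x j ∈ A} ⊆ ⋃ i, U i)
    (hsec : ∀ i, HasSec k (U i)) :
    ∃ W : Fin r → Set (Fin (k - 1) → X),
      (∀ i, ∃ V, IsOpen V ∧ W i = {x : Fin (k - 1) → X | ∀ j, x j ∈ A} ∩ V) ∧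
      {x : Fin (k - 1) → X | ∀ j, x j ∈ A} ⊆ (⋃ i, W i) ∧
      ∀ i, NullHomotopicIncl (W i) := by
  obtain ⟨a, ha⟩ := hA
  obtain ⟨n, rfl⟩ : ∃ n, k = n + 1 := ⟨k - 1, by omega⟩
  rw [Nat.add_sub_cancel]
  have hcons : Continuous fun y : Fin n → X => (Fin.cons a y : Fin (n + 1) → X) := by
    refine continuous_pi fun i => ?_
    refine Fin.cases ?_ (fun j => ?_) i
    · simpa using continuous_const
    · simpa using continuous_apply j
  refine ⟨fun i => {y | (Fin.cons a y : Fin (n + 1) → X) ∈ U i}, fun i => ?_, fun y hy => ?_,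
    fun i => nullHomotopicIncl_preimage_cons a (U i) (hsec i)⟩
  · obtain ⟨V, hV, hUV⟩ := hrel i
    refine ⟨_, hV.preimage hcons, ?_⟩
    ext y
    simp [hUV, Fin.forall_fin_succ, ha]
  · have hy' : (Fin.cons a y : Fin (n + 1) → X) ∈ {x : Fin (n + 1) → X | ∀ j, x j ∈ A} := by
      simpa [Fin.forall_fin_succ, ha] using hy
    simpa using hcov hy'
end

section
/- Let q : X̃ → X be a covering map between path-connected topological spaces and k ≥ 2. Then TC_k(X̃) ≤ cat(X^k): if X^k can be covered by m open sets each of whose inclusions into X^k is null-homotopic, then X̃^k can be covered by m open sets each admitting a continuous section of π_k : C([0,1],X̃) → X̃^k. -/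
/-!
The homotopy contracting an open set `V ⊆ X^k` lifts, coordinate by coordinate, to its preimage
`U ⊆ Xt^k`, and deforms each coordinate projection `U → Xt` to a map into a fibre of `q`. A fibre of
a covering map is discrete, so choosing arbitrarily a path from each of its points to a fixed base
point is a continuous choice, and the coordinate projections `U → Xt` are all null-homotopic
(`homotopic_const_of_comp`). In particular consecutive projections are homotopic, and running
through these homotopies one after another gives paths that visit the `k` coordinates in turn
(`exists_real_family`), which is a section of `π_k` over `U`.
-/

open scoped unitInterval

/-- If `q ∘ a` is null-homotopic for a covering map `q` with path-connected total space, then `a`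
is homotopic to every constant map: the lifted homotopy ends in a discrete fibre, whose points
can be joined to `x₀` independently of each other. -/
theorem homotopic_const_of_comp {Y E X : Type*} [TopologicalSpace Y] [TopologicalSpace E]
    [TopologicalSpace X] [PathConnectedSpace E] {q : E → X} (hq : IsCoveringMap q)
    (a : C(Y, E)) (x : X)
    (h : ContinuousMap.Homotopic ((⟨q, hq.continuous⟩ : C(E, X)).comp a)
      (ContinuousMap.const Y x)) (x₀ : E) :
    ContinuousMap.Homotopic a (ContinuousMap.const Y x₀) := by
  obtain ⟨H⟩ := h
  have H0 : ∀ y, H.toContinuousMap (0, y) = q (a y) := fun y => H.apply_zero y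
  let L : C(I × Y, E) := hq.liftHomotopy H.toContinuousMap a H0
  have hL : ∀ z, q (L z) = H z := fun z =>
    congrFun (hq.liftHomotopy_lifts H.toContinuousMap a H0) z
  have hL1 : ∀ y, L (1, y) ∈ q ⁻¹' {x} := fun y => by
    have := H.apply_one y
    simp only [Set.mem_preimage, Set.mem_singleton_iff, hL]
    exact this
  let e : C(Y, q ⁻¹' {x}) := ⟨fun y => ⟨L (1, y), hL1 y⟩, by fun_prop⟩
  let c : ContinuousMap.Homotopy a ((⟨Subtype.val, continuous_subtype_val⟩ :
      C(q ⁻¹' {x}, E)).comp e) :=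
    { toContinuousMap := L
      map_zero_left := fun y => hq.liftHomotopy_zero H.toContinuousMap a H0 y
      map_one_left := fun y => rfl }
  have : DiscreteTopology (q ⁻¹' {x}) := (hq x).discreteTopology_fiber
  have P : ∀ p : q ⁻¹' {x}, Path (p : E) x₀ := fun p => PathConnectedSpace.somePath _ _
  let d : ContinuousMap.Homotopy (⟨Subtype.val, continuous_subtype_val⟩ : C(q ⁻¹' {x}, E))
      (ContinuousMap.const _ x₀) :=
    { toFun := fun z => P z.2 z.1
      continuous_toFun :=
        continuous_prod_of_discrete_right.2 fun p => (P p).continuous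
      map_zero_left := fun p => (P p).source
      map_one_left := fun p => (P p).target }
  exact ContinuousMap.Homotopic.trans ⟨c⟩ (ContinuousMap.Homotopic.comp ⟨d⟩ (.refl e))

/-- Concatenation of homotopies: maps `a 0, a 1, …`, each homotopic to the next, are the values at
the integer times `0, …, n` of one continuous family of maps parametrized by `ℝ`. -/
theorem exists_real_family {Y E : Type*} [TopologicalSpace Y] [TopologicalSpace E]
    (a : ℕ → C(Y, E)) (h : ∀ i, ContinuousMap.Homotopic (a i) (a (i + 1))) (n : ℕ) :
    ∃ G : C(ℝ × Y, E), ∀ i ≤ n, ∀ y, G ((i : ℝ), y) = a i y := by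
  induction n with
  | zero =>
    refine ⟨(a 0).comp ⟨Prod.snd, continuous_snd⟩, fun i hi y => ?_⟩
    obtain rfl : i = 0 := by omega
    rfl
  | succ n ih =>
    obtain ⟨G, hG⟩ := ih
    obtain ⟨H⟩ := h n
    refine ⟨⟨fun z => if z.1 ≤ n then G z
      else H (Set.projIcc 0 1 zero_le_one (z.1 - n), z.2), ?_⟩, fun i hi y => ?_⟩
    · refine Continuous.if_le (by fun_prop) ?_ continuous_fst continuous_const ?_
      · exact H.continuous.comp (((continuous_projIcc).comp (by fun_prop)).prodMk continuous_snd)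
      · rintro ⟨t, y⟩ (rfl : t = n)
        simp [hG n le_rfl]
    · rcases Nat.lt_or_ge n i with hi' | hi'
      · obtain rfl : i = n + 1 := by omega
        have : ¬ ((n : ℝ) + 1 ≤ n) := by linarith
        simp [this]
      · have : (i : ℝ) ≤ n := by exact_mod_cast hi'
        simp [this, hG i hi']

/-- For a covering map `q : X̃ → X` of path-connected spaces, `TC_k(X̃) ≤ cat(X^k)`,
in covering form. -/
theorem stmt8 {Xt X : Type*} [TopologicalSpace Xt] [TopologicalSpace X]
    [PathConnectedSpace Xt] [PathConnectedSpace X]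
    (k : ℕ) (hk : 2 ≤ k) (q : Xt → X) (hq : IsCoveringMap q)
    (m : ℕ)
    (hcat : ∃ V : Fin m → Set (Fin k → X),
      (∀ j, IsOpen (V j)) ∧ (⋃ j, V j) = Set.univ ∧ ∀ j, NullHomotopicIncl (V j)) :
    TCCoverAt Xt k m := by
  obtain ⟨V, hVo, hVu, hVn⟩ := hcat
  let Q : (Fin k → Xt) → (Fin k → X) := fun u i => q (u i)
  have hQ : Continuous Q :=
    continuous_pi fun i => hq.continuous.comp (continuous_apply i)
  refine ⟨fun j => Q ⁻¹' V j, fun j => (hVo j).preimage hQ, ?_, fun j => ?_⟩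
  · rw [← Set.preimage_iUnion, hVu, Set.preimage_univ]
  obtain ⟨z, hz⟩ := hVn j
  obtain ⟨x₀⟩ : Nonempty Xt := inferInstance
  let pr : Fin k → C(Q ⁻¹' V j, Xt) := fun i =>
    ⟨fun u => u.1 i, (continuous_apply i).comp continuous_subtype_val⟩
  have hpr : ∀ i, ContinuousMap.Homotopic (pr i) (ContinuousMap.const _ x₀) := fun i => by
    refine homotopic_const_of_comp hq (pr i) (z i) ?_ x₀
    let r : C(Q ⁻¹' V j, V j) := ⟨fun u => ⟨Q u.1, u.2⟩, by fun_prop⟩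
    let ev : C(Fin k → X, X) := ⟨fun w => w i, continuous_apply i⟩
    exact ContinuousMap.Homotopic.comp (.refl ev) (ContinuousMap.Homotopic.comp hz (.refl r))
  -- Padding the finite list of projections by its first entry gives a sequence indexed by `ℕ`.
  let a : ℕ → C(Q ⁻¹' V j, Xt) := fun i => if hi : i < k then pr ⟨i, hi⟩ else pr ⟨0, by omega⟩
  have ha : ∀ i, ContinuousMap.Homotopic (a i) (ContinuousMap.const _ x₀) := fun i => by
    dsimp only [a]
    split_ifs <;> exact hpr _
  obtain ⟨G, hG⟩ := exists_real_family a (fun i => (ha i).trans (ha (i + 1)).symm) k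
  let F : C((Q ⁻¹' V j) × I, Xt) :=
    ⟨fun p => G (((k : ℝ) - 1) * (p.2 : ℝ), p.1), by fun_prop⟩
  refine ⟨F.curry, fun u => funext fun i => ?_⟩
  have hk1 : (0 : ℝ) < (k : ℝ) - 1 := by
    have : (2 : ℝ) ≤ k := by exact_mod_cast hk
    linarith
  have hik : (i : ℝ) ≤ (k : ℝ) - 1 := by
    have : ((i : ℕ) : ℝ) + 1 ≤ k := by exact_mod_cast i.2
    linarith
  have hmem : (i : ℝ) / ((k : ℝ) - 1) ∈ Set.Icc (0 : ℝ) 1 :=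
    ⟨by positivity, (div_le_one hk1).2 hik⟩
  have h1 : pik k (F.curry u) i = G (((k : ℝ) - 1) * ((i : ℝ) / ((k : ℝ) - 1)), u) := by
    simp [pik, F, Set.projIcc_of_mem zero_le_one hmem]
  rw [h1, mul_div_cancel₀ _ hk1.ne', hG i i.2.le]
  simp [a, pr]
end

section
/- Let X be a path-connected topological space, k ≥ 2, and let q : X^k → Y be a closed continuous surjection onto a topological space Y. Suppose: (i) every open cover of Y admits an open refinement that can be partitioned into ℓ+1 subfamilies, each consisting of pairwise disjoint sets (this holds when Y is paracompact of covering dimension at most ℓ); and (ii) for every y ∈ Y there exist n open subsets of X^k whose union contains the fiber q^{-1}(y), each admitting a continuous section of π_k. Then TC_k(X) ≤ (ℓ+1)·n: X^k can be covered by (ℓ+1)·n open sets each admitting a continuous section of π_k. -/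
/-!
Since `q` is closed, every open neighbourhood of a fibre `q ⁻¹' {y}` contains a saturated one
`q ⁻¹' V y` with `V y` an open neighbourhood of `y`. Take for the neighbourhood of the fibre the
union of the `n` open sets `U y j` carrying sections of `π_k`, and refine the cover `{V y}` into
`ℓ + 1` disjoint families. For a member `W ⊆ V y` of the `i`-th family, `q ⁻¹' W` is covered by the
open sets `q ⁻¹' W ∩ U y j`, over each of which `π_k` has a section. For fixed `i` and `j` these
sets are pairwise disjoint as `W` varies, so the sections glue over their union
(`HasSec.iUnion_of_disjoint`). This gives `(ℓ + 1) * n` open sets covering `X ^ k`.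
-/

open scoped unitInterval

theorem HasSec.mono {X : Type*} [TopologicalSpace X] {k : ℕ} {S T : Set (Fin k → X)}
    (h : HasSec k T) (hST : S ⊆ T) : HasSec k S := by
  obtain ⟨s, hs⟩ := h
  exact ⟨s.comp ⟨Set.inclusion hST, continuous_inclusion hST⟩, fun u => hs (Set.inclusion hST u)⟩

/-- Sections over pairwise disjoint open sets glue to a section over their union. -/
theorem HasSec.iUnion_of_disjoint {X ι : Type*} [TopologicalSpace X] {k : ℕ}
    {A : ι → Set (Fin k → X)} (hA : ∀ i, IsOpen (A i))
    (hd : ∀ i j x, x ∈ A i → x ∈ A j → i = j) (hs : ∀ i, HasSec k (A i)) :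
    HasSec k (⋃ i, A i) := by
  choose s hs using hs
  let S : ι → Set ↥(⋃ i, A i) := fun i => Subtype.val ⁻¹' A i
  let φ : ∀ i, C(S i, C(unitInterval, X)) := fun i =>
    (s i).comp ⟨fun x => ⟨x.1.1, x.2⟩, by fun_prop⟩
  have hφ : ∀ (i j) (x : ↥(⋃ i, A i)) (hxi : x ∈ S i) (hxj : x ∈ S j),
      φ i ⟨x, hxi⟩ = φ j ⟨x, hxj⟩ := by
    intro i j x hxi hxj
    obtain rfl := hd i j x.1 hxi hxj
    rfl
  have hS : ∀ x : ↥(⋃ i, A i), ∃ i, S i ∈ nhds x := by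
    intro x
    obtain ⟨i, hi⟩ := Set.mem_iUnion.1 x.2
    exact ⟨i, ((hA i).preimage continuous_subtype_val).mem_nhds hi⟩
  refine ⟨ContinuousMap.liftCover S φ hφ hS, fun u => ?_⟩
  obtain ⟨i, hi⟩ := Set.mem_iUnion.1 u.2
  have h := ContinuousMap.liftCover_coe (S := S) (φ := φ) (hφ := hφ) (hS := hS) (i := i) ⟨u, hi⟩
  rw [h]
  exact hs i ⟨u.1, hi⟩

/-- If `q : X^k → Y` is a closed continuous surjection, every open cover of `Y` refines
into `ℓ+1` disjoint subfamilies, and every fibre of `q` is covered by `n` open subsets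
of `X^k` admitting continuous sections of `π_k`, then `TC_k(X) ≤ (ℓ+1)·n`. -/
theorem stmt10 {X Y : Type*} [TopologicalSpace X] [TopologicalSpace Y]
    [PathConnectedSpace X]
    (k : ℕ) (hk : 2 ≤ k) (q : (Fin k → X) → Y)
    (hqc : Continuous q) (hqcl : IsClosedMap q) (hqs : Function.Surjective q)
    (ℓ n : ℕ)
    (hdim : ∀ 𝒰 : Set (Set Y), (∀ U ∈ 𝒰, IsOpen U) → ⋃₀ 𝒰 = Set.univ →
      ∃ 𝒱 : Fin (ℓ + 1) → Set (Set Y),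
        (∀ i, ∀ W ∈ 𝒱 i, IsOpen W ∧ ∃ U ∈ 𝒰, W ⊆ U) ∧
        (⋃ i, ⋃₀ 𝒱 i) = Set.univ ∧
        ∀ i, (𝒱 i).PairwiseDisjoint id)
    (hfib : ∀ y : Y, ∃ U : Fin n → Set (Fin k → X),
      (∀ j, IsOpen (U j)) ∧ (q ⁻¹' {y} ⊆ ⋃ j, U j) ∧ ∀ j, HasSec k (U j)) :
    TCCoverAt X k ((ℓ + 1) * n) := by
  choose U hUo hUf hUs using hfib
  -- `V y` is the largest subset of `Y` whose preimage lies in `⋃ j, U y j`.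
  let V : Y → Set Y := fun y => (q '' (⋃ j, U y j)ᶜ)ᶜ
  have hVo : ∀ y, IsOpen (V y) := fun y =>
    (hqcl _ (isOpen_iUnion (hUo y)).isClosed_compl).isOpen_compl
  have hyV : ∀ y, y ∈ V y := by
    rintro y ⟨x, hx, rfl⟩
    exact hx (hUf (q x) rfl)
  have hVU : ∀ y x, q x ∈ V y → ∃ j, x ∈ U y j := by
    intro y x hx
    by_contra h
    exact hx ⟨x, fun hx' => h (Set.mem_iUnion.1 hx'), rfl⟩
  obtain ⟨𝒱, hV, hcov, hdisj⟩ := hdim (Set.range V) (by rintro _ ⟨y, rfl⟩; exact hVo y)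
    (Set.eq_univ_of_forall fun y => ⟨V y, ⟨y, rfl⟩, hyV y⟩)
  have hc : ∀ i, ∀ W : 𝒱 i, ∃ y, (W : Set Y) ⊆ V y := by
    intro i W
    obtain ⟨_, _, ⟨y, rfl⟩, h⟩ := hV i W.1 W.2
    exact ⟨y, h⟩
  choose c hc using hc
  let A : ∀ p : Fin (ℓ + 1) × Fin n, 𝒱 p.1 → Set (Fin k → X) :=
    fun p W => q ⁻¹' W ∩ U (c p.1 W) p.2
  have hAo : ∀ p W, IsOpen (A p W) := fun p W =>
    ((hV p.1 W.1 W.2).1.preimage hqc).inter (hUo _ _)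
  refine ⟨fun m => ⋃ W, A (finProdFinEquiv.symm m) W, fun m => isOpen_iUnion (hAo _), ?_, ?_⟩
  · refine Set.eq_univ_of_forall fun x => ?_
    have hx : q x ∈ ⋃ i, ⋃₀ 𝒱 i := hcov ▸ Set.mem_univ _
    obtain ⟨i, W, hW, hxW⟩ := Set.mem_iUnion.1 hx
    obtain ⟨j, hj⟩ := hVU _ x (hc i ⟨W, hW⟩ hxW)
    refine Set.mem_iUnion.2 ⟨finProdFinEquiv (i, j), ?_⟩
    rw [Equiv.symm_apply_apply]
    exact Set.mem_iUnion.2 ⟨⟨W, hW⟩, hxW, hj⟩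
  · intro m
    refine HasSec.iUnion_of_disjoint (hAo _) ?_ fun W => (hUs _ _).mono Set.inter_subset_right
    intro W W' x hx hx'
    exact Subtype.ext ((hdisj _).elim_set W.2 W'.2 (q x) hx.1 hx'.1)
end

section
/- For all integers k ≥ 2, m ≥ 2 and n ≥ 0, the higher topological complexity of the lens space satisfies TC_k(L^{2n+1}_m) ≤ k(2n+1): the k-fold product (L^{2n+1}_m)^k can be covered by k(2n+1) open sets each admitting a continuous section of π_k : C([0,1], L^{2n+1}_m) → (L^{2n+1}_m)^k. -/
/-! The circle acts diagonally on `L^k`, freely up to a finite kernel, so motion planning on `L^k`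
is really a problem over a quotient of dimension `k(2n+1) - 1`, and one open set per dimension
suffices. The proof makes this explicit with a circle-invariant stratification of `(S^{2n+1})^k`.

A tuple `x` is labelled by the position `l_i` of the last nonzero coordinate of each `x_i`, together
with the partition of the indices according to equality of the phases of `x_{i,l_i}^m`. A stratum
has dimension (modulo the circle) `∑ 2 l_i + #{distinct phases} - 1 ≤ 2nk + k - 1`, which gives
`k(2n+1)` possible values of the rank (`rk`, `rk_lt`). The frontier of a stratum meets only strata
of smaller rank (`cls_eq_of_strataFun`): if a position drops, this costs at least `2` while at most
one new phase appears. Hence strata of equal rank have disjoint open neighbourhoods, cut out by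
comparing continuous functions which vanish on one stratum each (`exists_separated`).

Near a stratum any two coordinates `x_i`, `x_{i'}` are homotopic as maps to `L`
(`coordMap_homotopic`). One first contracts each point linearly to its `l_i`-th component, then
passes from one coordinate axis to the other, and finally rotates one phase into the other. The
rotation requires a continuous argument of `(x_{i,l_i} / x_{i',l_{i'}})^m`. There is one near the
stratum because there this number either avoids the negative real axis or avoids the positive real
axis, which can serve as a branch cut. All homotopies are built upstairs in the sphere, compatibly
with the action of the `m`-th roots of unity. Concatenating them gives a section of `π_k`
(`exists_planner`), and sections on disjoint open sets glue (`glue_planners`).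
-/

open scoped unitInterval

/-- The equivalence relation on `S^{2n+1} ⊆ ℂ^{n+1}` identifying points in the same
orbit of the group of `m`-th roots of unity acting by complex scalar multiplication. -/
noncomputable def lensSetoid (m n : ℕ) :
    Setoid (Metric.sphere (0 : EuclideanSpace ℂ (Fin (n + 1))) 1) where
  r x y := ∃ ζ : ℂˣ, ζ ^ m = 1 ∧
    (y : EuclideanSpace ℂ (Fin (n + 1))) = ζ • (x : EuclideanSpace ℂ (Fin (n + 1)))
  iseqv := by
    constructor
    · exact fun x => ⟨1, one_pow m, (one_smul _ _).symm⟩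
    · rintro x y ⟨ζ, hζ, h⟩
      exact ⟨ζ⁻¹, by rw [inv_pow, hζ, inv_one], by rw [h, inv_smul_smul]⟩
    · rintro x y z ⟨ζ₁, h₁, e₁⟩ ⟨ζ₂, h₂, e₂⟩
      exact ⟨ζ₂ * ζ₁, by rw [mul_pow, h₁, h₂, one_mul], by rw [e₂, e₁, smul_smul]⟩

/-- The lens space `L^{2n+1}_m`, the quotient of the unit sphere `S^{2n+1} ⊆ ℂ^{n+1}`
by the action of the `m`-th roots of unity, with the quotient topology. -/
noncomputable def LensSpace (m n : ℕ) : Type :=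
  Quotient (lensSetoid m n)

noncomputable instance (m n : ℕ) : TopologicalSpace (LensSpace m n) :=
  inferInstanceAs (TopologicalSpace (Quotient (lensSetoid m n)))

open Topology

/-! ### Separating strata of equal rank -/

/-- If two labellings `φ, ψ` satisfy `ψ i = ψ j → φ i = φ j` on `s`, then `φ` takes at most as many
values on `s` as `ψ`. -/
lemma card_image_le_of_imp {ι α β : Type*} [DecidableEq α] [DecidableEq β] (s : Finset ι)
    (φ : ι → α) (ψ : ι → β) (h : ∀ i ∈ s, ∀ j ∈ s, ψ i = ψ j → φ i = φ j) :
    (s.image φ).card ≤ (s.image ψ).card := by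
  classical
  rcases s.eq_empty_or_nonempty with rfl | ⟨i₀, _⟩
  · simp
  have hx : ∀ b, ∃ a, ∀ i ∈ s, ψ i = b → φ i = a := by
    intro b
    by_cases hb : ∃ i ∈ s, ψ i = b
    · obtain ⟨i, hi, rfl⟩ := hb
      exact ⟨φ i, fun j hj hji => h j hj i hi hji⟩
    · exact ⟨φ i₀, fun i hi hib => (hb ⟨i, hi, hib⟩).elim⟩
  choose g hg using hx
  have : s.image φ ⊆ (s.image ψ).image g := by
    intro a ha
    obtain ⟨i, hi, rfl⟩ := Finset.mem_image.1 ha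
    exact Finset.mem_image.2 ⟨ψ i, Finset.mem_image_of_mem _ hi, (hg _ i hi rfl).symm⟩
  exact (Finset.card_le_card this).trans Finset.card_image_le

/-- Equality case of `card_image_le_of_imp`: the two labellings induce the same partition. -/
lemma imp_of_card_image_le {ι α β : Type*} [Fintype ι] [DecidableEq α] [DecidableEq β]
    (φ : ι → α) (ψ : ι → β) (h : ∀ i j, ψ i = ψ j → φ i = φ j)
    (hc : (Finset.univ.image ψ).card ≤ (Finset.univ.image φ).card) :
    ∀ i j, φ i = φ j → ψ i = ψ j := by
  classical
  intro i₀ j₀ hij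
  have hx : ∀ b, ∃ a, ∀ i, ψ i = b → φ i = a := by
    intro b
    by_cases hb : ∃ i, ψ i = b
    · obtain ⟨i, rfl⟩ := hb
      exact ⟨φ i, fun j hji => h j i hji⟩
    · exact ⟨φ i₀, fun i hib => (hb ⟨i, hib⟩).elim⟩
  choose g hg using hx
  have himg : Finset.univ.image φ = (Finset.univ.image ψ).image g := by
    rw [Finset.image_image]
    exact Finset.image_congr fun i _ => hg _ i rfl
  have hinj : Set.InjOn g (Finset.univ.image ψ) := by
    apply Finset.card_image_iff.1
    apply le_antisymm Finset.card_image_le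
    rw [← himg]; exact hc
  apply hinj (by simp) (by simp)
  rw [← hg _ i₀ rfl, ← hg _ j₀ rfl, hij]

/-- Let `Y` be partitioned into finitely many strata `{cls = a}`, and let `D a ≥ 0` be a continuous
function vanishing on the stratum `a` but nowhere on the other strata of the same rank. Then the
strata of a given rank have open neighbourhoods, inside prescribed ones, such that points of
different neighbourhoods are distinguished by some `D b`. In particular the neighbourhoods are
disjoint, and so are their images in any quotient to which all the `D b` descend. -/
lemma exists_separated {Y A : Type*} [TopologicalSpace Y] [Finite A] (cls : Y → A) (rk : Y → ℕ)
    (D : A → Y → ℝ) (hDc : ∀ a, Continuous (D a)) (hD0 : ∀ a y, 0 ≤ D a y)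
    (hDs : ∀ y, D (cls y) y = 0)
    (hDr : ∀ x y, D (cls y) x = 0 → rk x = rk y → cls x = cls y)
    (U : A → Set Y) (hUo : ∀ a, IsOpen (U a)) (hU : ∀ y, y ∈ U (cls y)) :
    ∃ V : ℕ → A → Set Y, (∀ r a, IsOpen (V r a)) ∧ (∀ r a, V r a ⊆ U a) ∧
      (∀ y, y ∈ V (rk y) (cls y)) ∧
      ∀ r a a' z z', z ∈ V r a → z' ∈ V r a' → (∀ b, D b z = D b z') → a = a' := by
  let Q : ℕ → A → Prop := fun r a => ∃ y, cls y = a ∧ rk y = r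
  refine ⟨fun r a => {z | z ∈ U a ∧ Q r a ∧ ∀ a', a' ≠ a → Q r a' → D a z < D a' z},
    ?_, ?_, ?_, ?_⟩
  · intro r a
    have h3 : IsOpen {z | ∀ a', a' ≠ a → Q r a' → D a z < D a' z} := by
      simp only [Set.ofPred_forall]
      exact isOpen_iInter_of_finite fun a' => isOpen_iInter_of_finite fun _ =>
        isOpen_iInter_of_finite fun _ => isOpen_lt (hDc a) (hDc a')
    exact (hUo a).inter (isOpen_const.inter h3)
  · rintro r a z ⟨h, -⟩; exact h
  · refine fun y => ⟨hU y, ⟨y, rfl, rfl⟩, ?_⟩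
    rintro a' hne ⟨y', rfl, hr⟩
    rw [hDs]
    refine lt_of_le_of_ne (hD0 _ _) fun h0 => hne ?_
    exact (hDr y y' h0.symm hr.symm).symm
  · rintro r a a' z z' ⟨-, q, h⟩ ⟨-, q', h'⟩ hb
    by_contra hne
    have h1 := h a' (Ne.symm hne) q'
    have h2 := h' a hne q
    rw [← hb, ← hb] at h2
    exact lt_asymm h1 h2

/-! ### From homotopies to motion planners -/

/-- A map `f` on `V ⊆ Y` is constant on the fibres of `q : Y → T`. -/
def FibreConst {Y T X : Type*} [TopologicalSpace Y] [TopologicalSpace X] (q : Y → T) (V : Set Y)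
    (f : C(V, X)) : Prop :=
  ∀ z w : V, q z = q w → f z = f w

/-- Successive homotopies `f 0 ≃ f 1 ≃ ⋯ ≃ f N` are concatenated to a map passing through `f i` at
time `i`. -/
lemma exists_concat {Y T X : Type*} [TopologicalSpace Y] [TopologicalSpace X] (q : Y → T)
    (V : Set Y) (f : ℕ → C(V, X))
    (h : ∀ i, (f i).HomotopicWith (f (i + 1)) (FibreConst q V)) (N : ℕ) :
    ∃ G : C(V × ℝ, X), (∀ i ≤ N, ∀ z, G (z, (i : ℝ)) = f i z) ∧
      ∀ z z' : V, q z = q z' → ∀ t, G (z, t) = G (z', t) := by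
  induction N with
  | zero =>
    obtain ⟨F⟩ := h 0
    refine ⟨(f 0).comp ContinuousMap.fst, ?_, ?_⟩
    · intro i hi z
      obtain rfl : i = 0 := by omega
      rfl
    · intro z z' hz t
      have := F.prop 0 z z' hz
      simpa using this
  | succ N ih =>
    obtain ⟨G, hG, hGc⟩ := ih
    obtain ⟨F⟩ := h N
    refine ⟨⟨fun p => if p.2 ≤ N then G p else
      F (Set.projIcc 0 1 zero_le_one (p.2 - N), p.1), ?_⟩, ?_, ?_⟩
    · refine Continuous.if_le G.continuous ?_ continuous_snd continuous_const ?_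
      · exact F.continuous.comp (by fun_prop)
      · rintro ⟨z, t⟩ ht
        simp only at ht
        subst ht
        simp [hG N le_rfl]
    · intro i hi z
      rcases Nat.lt_or_eq_of_le hi with hi | rfl
      · have : (i : ℝ) ≤ N := by exact_mod_cast Nat.lt_succ_iff.1 hi
        simp [this, hG i (Nat.lt_succ_iff.1 hi)]
      · simp
    · intro z z' hz t
      simp only [ContinuousMap.coe_mk]
      split_ifs
      · exact hGc z z' hz t
      · exact F.prop _ _ _ hz

/-- A local motion planner on `q '' V`, where `q : Y → X^k` is an open surjection, exists as soon as
all the coordinates of `q` are homotopic on `V` through maps constant on the fibres of `q`. -/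
lemma exists_planner {Y X : Type*} [TopologicalSpace Y] [TopologicalSpace X] {k : ℕ} (hk : 2 ≤ k)
    (q : Y → Fin k → X) (hq : IsOpenQuotientMap q) (V : Set Y) (hV : IsOpen V)
    (f : Fin k → C(V, X)) (hf : ∀ i (z : V), f i z = q z i)
    (h : ∀ i j, (f i).HomotopicWith (f j) (FibreConst q V)) :
    ∃ s : (Fin k → X) → C(unitInterval, X), ContinuousOn s (q '' V) ∧
      ∀ u ∈ q '' V, pik k (s u) = u := by
  classical
  let e : ℕ → Fin k := fun i => if hi : i < k then ⟨i, hi⟩ else ⟨0, by omega⟩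
  obtain ⟨G, hG, hGc⟩ := exists_concat q V (fun i => f (e i)) (fun i => h _ _) k
  let H : C(V × unitInterval, X) :=
    ⟨fun p => G (p.1, ((k : ℝ) - 1) * (p.2 : ℝ)), G.continuous.comp (by fun_prop)⟩
  have hHc : ∀ z z' : V, q z = q z' → H.curry z = H.curry z' := by
    intro z z' hz
    ext t
    exact hGc z z' hz _
  let s : (Fin k → X) → C(unitInterval, X) := fun u =>
    if hu : ∃ z : V, q z = u then H.curry hu.choose else ContinuousMap.const _ (u (e 0))
  have hs : ∀ z : V, s (q z) = H.curry z := by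
    intro z
    have hu : ∃ z' : V, q z' = q z := ⟨z, rfl⟩
    simp only [s, dif_pos hu]
    exact hHc _ _ hu.choose_spec
  refine ⟨s, ?_, ?_⟩
  · rintro _ ⟨z, hz, rfl⟩
    refine ContinuousAt.continuousWithinAt ?_
    have h1 : ContinuousOn (s ∘ q) V := by
      rw [continuousOn_iff_continuous_domRestrict]
      have : V.domRestrict (s ∘ q) = H.curry := funext hs
      rw [this]; exact H.curry.continuous
    have h2 : ContinuousAt (s ∘ q) z := h1.continuousAt (hV.mem_nhds hz)
    unfold ContinuousAt
    rw [← hq.map_nhds_eq]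
    exact h2
  · rintro _ ⟨z, hz, rfl⟩
    rw [hs ⟨z, hz⟩]
    funext i
    have hk1 : (0 : ℝ) < (k : ℝ) - 1 := by
      have : (2 : ℝ) ≤ k := by exact_mod_cast hk
      linarith
    have hi : ((i : ℕ) : ℝ) / ((k : ℝ) - 1) ∈ Set.Icc (0 : ℝ) 1 := by
      refine ⟨by positivity, ?_⟩
      rw [div_le_one hk1]
      have : (i : ℕ) + 1 ≤ k := i.2
      have : ((i : ℕ) : ℝ) + 1 ≤ k := by exact_mod_cast this
      linarith
    have he : e i = i := by simp [e]
    simp only [pik, ContinuousMap.curry_apply, H, ContinuousMap.coe_mk, Set.projIcc_of_mem _ hi]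
    rw [mul_div_cancel₀ _ hk1.ne', hG _ i.2.le, he, hf]

/-- Motion planners on disjoint open sets glue to one on the union. -/
lemma glue_planners {X ι : Type*} [TopologicalSpace X] {k : ℕ}
    (W : ι → Set (Fin k → X)) (hW : ∀ b, IsOpen (W b))
    (hd : ∀ b b' u, u ∈ W b → u ∈ W b' → b = b')
    (hs : ∀ b, ∃ s : (Fin k → X) → C(unitInterval, X), ContinuousOn s (W b) ∧
      ∀ u ∈ W b, pik k (s u) = u) :
    HasSec k (⋃ b, W b) := by
  choose s hsc hsp using hs
  let c : (⋃ b, W b) → ι := fun u => (Set.mem_iUnion.1 u.2).choose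
  have hc : ∀ u : (⋃ b, W b), (u : Fin k → X) ∈ W (c u) :=
    fun u => (Set.mem_iUnion.1 u.2).choose_spec
  refine ⟨⟨fun u => s (c u) u, ?_⟩, fun u => hsp _ _ (hc u)⟩
  rw [continuous_iff_continuousAt]
  intro u
  have h1 : ContinuousAt (fun v : (⋃ b, W b) => s (c u) v) u :=
    ((hsc (c u)).continuousAt ((hW _).mem_nhds (hc u))).comp continuous_subtype_val.continuousAt
  refine h1.congr ?_
  filter_upwards [continuous_subtype_val.continuousAt.preimage_mem_nhds
    ((hW (c u)).mem_nhds (hc u))] with v hv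
  rw [hd _ _ _ hv (hc v)]

/-! ### The lens space as an open quotient of the sphere -/

/-- The unit sphere `S^{2n+1} ⊆ ℂ^{n+1}`. -/
abbrev Sph (n : ℕ) := Metric.sphere (0 : EuclideanSpace ℂ (Fin (n + 1))) 1

/-- The projection of the sphere onto the lens space. -/
noncomputable def lensMk (m n : ℕ) (z : Sph n) : LensSpace m n :=
  Quotient.mk (lensSetoid m n) z

lemma lensMk_eq {m n : ℕ} {z z' : Sph n} : lensMk m n z = lensMk m n z' ↔
    ∃ ζ : ℂˣ, ζ ^ m = 1 ∧
      (z' : EuclideanSpace ℂ (Fin (n + 1))) = ζ • (z : EuclideanSpace ℂ (Fin (n + 1))) :=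
  Quotient.eq (r := lensSetoid m n)

lemma continuous_lensMk (m n : ℕ) : Continuous (lensMk m n) := continuous_quot_mk

lemma norm_root {m : ℕ} (hm : m ≠ 0) {ζ : ℂˣ} (h : ζ ^ m = 1) : ‖(ζ : ℂ)‖ = 1 :=
  Complex.norm_eq_one_of_pow_eq_one (by rw [← Units.val_pow_eq_pow_val, h, Units.val_one]) hm

lemma isOpenQuotientMap_lensMk {m : ℕ} (hm : m ≠ 0) (n : ℕ) :
    IsOpenQuotientMap (lensMk m n) := by
  refine ⟨Quotient.mk_surjective, continuous_lensMk m n, fun U hU => ?_⟩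
  have hq : IsQuotientMap (lensMk m n) := isQuotientMap_quot_mk
  rw [← hq.isOpen_preimage]
  have hn : ∀ ζ : {ζ : ℂˣ // ζ ^ m = 1}, ∀ z : Sph n,
      (ζ : ℂˣ) • (z : EuclideanSpace ℂ (Fin (n + 1))) ∈
        Metric.sphere (0 : EuclideanSpace ℂ (Fin (n + 1))) 1 := by
    intro ζ z
    rw [Units.smul_def, mem_sphere_zero_iff_norm, norm_smul, norm_root hm ζ.2, one_mul]
    exact mem_sphere_zero_iff_norm.1 z.2
  have : lensMk m n ⁻¹' (lensMk m n '' U) = ⋃ ζ : {ζ : ℂˣ // ζ ^ m = 1},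
      (fun z : Sph n => (⟨(ζ : ℂˣ) • (z : EuclideanSpace ℂ (Fin (n + 1))), hn ζ z⟩ : Sph n)) ⁻¹' U := by
    ext z
    simp only [Set.mem_preimage, Set.mem_image, Set.mem_iUnion]
    constructor
    · rintro ⟨w, hw, h⟩
      obtain ⟨ζ, hζ, e⟩ := lensMk_eq.1 h.symm
      refine ⟨⟨ζ, hζ⟩, ?_⟩
      convert hw using 1
      exact Subtype.ext e.symm
    · rintro ⟨ζ, h⟩
      exact ⟨_, h, (lensMk_eq.2 ⟨ζ, ζ.2, rfl⟩).symm⟩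
  rw [this]
  refine isOpen_iUnion fun ζ => hU.preimage (Continuous.subtype_mk ?_ _)
  simp only [Units.smul_def]
  exact (continuous_subtype_val : Continuous fun z : Sph n =>
    (z : EuclideanSpace ℂ (Fin (n + 1)))).const_smul ((ζ : ℂˣ) : ℂ)

/-- The class in the lens space of the normalization of a nonzero vector. -/
noncomputable def lensProj (m n : ℕ) (v : {v : EuclideanSpace ℂ (Fin (n + 1)) // v ≠ 0}) :
    LensSpace m n :=
  lensMk m n ⟨((‖(v : EuclideanSpace ℂ (Fin (n + 1)))‖⁻¹ : ℝ) : ℂ) • (v : EuclideanSpace ℂ (Fin (n + 1))), by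
    have : ‖(v : EuclideanSpace ℂ (Fin (n + 1)))‖ ≠ 0 := norm_ne_zero_iff.2 v.2
    rw [mem_sphere_zero_iff_norm, norm_smul]
    simp [this]⟩

lemma continuous_lensProj (m n : ℕ) : Continuous (lensProj m n) := by
  have hn : Continuous fun v : {v : EuclideanSpace ℂ (Fin (n + 1)) // v ≠ 0} =>
      ‖(v : EuclideanSpace ℂ (Fin (n + 1)))‖ := continuous_norm.comp continuous_subtype_val
  exact (continuous_lensMk m n).comp (Continuous.subtype_mk
    ((Complex.continuous_ofReal.comp (hn.inv₀ fun v => norm_ne_zero_iff.2 v.2)).smul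
      continuous_subtype_val) _)

lemma lensProj_sphere {m n : ℕ} (z : Sph n) (h : (z : EuclideanSpace ℂ (Fin (n + 1))) ≠ 0) :
    lensProj m n ⟨z, h⟩ = lensMk m n z := by
  unfold lensProj
  congr 1
  apply Subtype.ext
  have : ‖(z : EuclideanSpace ℂ (Fin (n + 1)))‖ = 1 := mem_sphere_zero_iff_norm.1 z.2
  simp [this]

/-- Vectors with the same direction up to an `m`-th root of unity have the same class. -/
lemma lensProj_eq {m n : ℕ} (v w : {v : EuclideanSpace ℂ (Fin (n + 1)) // v ≠ 0})
    (c : ℂ) (hc : c ^ m = (‖c‖ : ℂ) ^ m)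
    (h : (w : EuclideanSpace ℂ (Fin (n + 1))) = c • (v : EuclideanSpace ℂ (Fin (n + 1)))) :
    lensProj m n v = lensProj m n w := by
  obtain ⟨v, hv⟩ := v
  obtain ⟨w, hw⟩ := w
  simp only at h
  subst h
  have hc0 : c ≠ 0 := fun h0 => hw (by simp [h0])
  have hc1 : (‖c‖ : ℂ) ≠ 0 := by simpa using hc0
  have hv0 : ‖v‖ ≠ 0 := norm_ne_zero_iff.2 hv
  refine lensMk_eq.2 ⟨Units.mk0 (c / ‖c‖) (div_ne_zero hc0 hc1), ?_, ?_⟩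
  · ext
    push_cast
    rw [Units.val_mk0, div_pow, hc, div_self (pow_ne_zero _ hc1)]
  · simp only [Units.smul_def, Units.val_mk0, smul_smul, norm_smul]
    congr 1
    push_cast
    field_simp

/-! ### The elementary homotopies -/

/-- The projection `(S^{2n+1})^k → L^k`. -/
noncomputable def lensPi (k m n : ℕ) (z : Fin k → Sph n) : Fin k → LensSpace m n :=
  fun i => lensMk m n (z i)

lemma isOpenQuotientMap_lensPi {m : ℕ} (hm : m ≠ 0) (k n : ℕ) :
    IsOpenQuotientMap (lensPi k m n) :=
  IsOpenQuotientMap.piMap fun _ => isOpenQuotientMap_lensMk hm n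

lemma continuous_vec {k n : ℕ} (V : Set (Fin k → Sph n)) (i : Fin k) :
    Continuous fun z : V => (z.1 i).1 :=
  continuous_subtype_val.comp ((continuous_apply i).comp continuous_subtype_val)

lemma continuous_entry {k n : ℕ} (V : Set (Fin k → Sph n)) (i : Fin k) (l : Fin (n + 1)) :
    Continuous fun z : V => (z.1 i).1 l :=
  (by fun_prop : Continuous fun v : EuclideanSpace ℂ (Fin (n + 1)) => v l).comp
    (continuous_vec V i)

lemma lensPi_eq {k m n : ℕ} (hm : m ≠ 0) {z z' : Fin k → Sph n}
    (h : lensPi k m n z = lensPi k m n z') :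
    ∃ ζ : Fin k → ℂ, (∀ i, ζ i ^ m = 1) ∧ (∀ i, ‖ζ i‖ = 1) ∧
      (∀ i, (z' i : EuclideanSpace ℂ (Fin (n + 1))) = ζ i • (z i).1) ∧
      ∀ i l, (z' i).1 l = ζ i * (z i).1 l := by
  have : ∀ i, ∃ ζ : ℂ, ζ ^ m = 1 ∧ ‖ζ‖ = 1 ∧
      (z' i : EuclideanSpace ℂ (Fin (n + 1))) = ζ • (z i).1 := by
    intro i
    obtain ⟨ζ, h1, h2⟩ := lensMk_eq.1 (congrFun h i)
    exact ⟨ζ, by rw [← Units.val_pow_eq_pow_val, h1, Units.val_one], norm_root hm h1, h2⟩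
  choose ζ h1 h2 h3 using this
  refine ⟨ζ, h1, h2, h3, fun i l => ?_⟩
  rw [h3 i]; rfl

/-- The `l`-th basis vector of `ℂ^{n+1}`. -/
noncomputable def stdVec {n : ℕ} (l : Fin (n + 1)) : EuclideanSpace ℂ (Fin (n + 1)) :=
  EuclideanSpace.single l 1

lemma stdVec_apply {n : ℕ} (l j : Fin (n + 1)) : stdVec l j = if j = l then (1 : ℂ) else 0 :=
  PiLp.single_apply 2 ℂ l 1 j

lemma smul_stdVec_ne {n : ℕ} (l : Fin (n + 1)) {c : ℂ} (hc : c ≠ 0) :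
    c • stdVec l ≠ 0 := by
  intro h
  have := congrArg (fun v : EuclideanSpace ℂ (Fin (n + 1)) => v l) h
  simp [hc, stdVec_apply] at this

/-- A family of nowhere vanishing vectors, equivariant up to `m`-th roots of unity along the fibres
of `lensPi`, induces a homotopy through maps constant on these fibres. -/
lemma homotopicWith_of_lift {k m n : ℕ} (V : Set (Fin k → Sph n))
    (F : ℝ → V → EuclideanSpace ℂ (Fin (n + 1)))
    (hF : Continuous fun p : ℝ × V => F p.1 p.2) (h0 : ∀ t ∈ Set.Icc (0 : ℝ) 1, ∀ z, F t z ≠ 0)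
    (hi : ∀ z z' : V, lensPi k m n z = lensPi k m n z' →
      ∃ c : ℂ, c ^ m = 1 ∧ ‖c‖ = 1 ∧ ∀ t, F t z' = c • F t z)
    (f g : C(V, LensSpace m n))
    (hf : ∀ z, f z = lensProj m n ⟨F 0 z, h0 0 (by simp) z⟩)
    (hg : ∀ z, g z = lensProj m n ⟨F 1 z, h0 1 (by simp) z⟩) :
    f.HomotopicWith g (FibreConst (lensPi k m n) V) := by
  refine ⟨⟨⟨⟨fun p => lensProj m n ⟨F p.1 p.2, h0 _ p.1.2 _⟩, ?_⟩, ?_, ?_⟩, ?_⟩⟩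
  · refine (continuous_lensProj m n).comp (Continuous.subtype_mk ?_ _)
    exact hF.comp (f := fun p : unitInterval × V => ((p.1 : ℝ), p.2)) (by fun_prop)
  · intro z; exact (hf z).symm
  · intro z; exact (hg z).symm
  · intro t z z' hz
    obtain ⟨c, h1, h2, h3⟩ := hi z z' hz
    exact lensProj_eq _ _ c (by simp [h1, h2]) (h3 _)

/-- The `i`-th coordinate `V → L`. -/
noncomputable def coordMap (k m n : ℕ) (V : Set (Fin k → Sph n)) (i : Fin k) :
    C(V, LensSpace m n) :=
  ⟨fun z => lensMk m n (z.1 i), (continuous_lensMk m n).comp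
    ((continuous_apply i).comp continuous_subtype_val)⟩

/-- The map `z ↦ [z_{i,l} e_{l'}]`, defined where `z_{i,l} ≠ 0`. -/
noncomputable def axisMap {k n : ℕ} (m : ℕ) (V : Set (Fin k → Sph n)) (i : Fin k)
    (l l' : Fin (n + 1)) (h : ∀ z : V, (z.1 i).1 l ≠ 0) : C(V, LensSpace m n) :=
  ⟨fun z => lensProj m n ⟨(z.1 i).1 l • stdVec l', smul_stdVec_ne l' (h z)⟩,
    (continuous_lensProj m n).comp (Continuous.subtype_mk
      ((continuous_entry V i l).smul continuous_const) _)⟩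

/-- Where `z_{i,l} ≠ 0`, the straight line from `z_i` to its `l`-th component avoids the origin. -/
lemma coordMap_homotopic_axisMap {k m n : ℕ} (hm : m ≠ 0) (V : Set (Fin k → Sph n)) (i : Fin k)
    (l : Fin (n + 1)) (h : ∀ z : V, (z.1 i).1 l ≠ 0) :
    (coordMap k m n V i).HomotopicWith (axisMap m V i l l h) (FibreConst (lensPi k m n) V) := by
  refine homotopicWith_of_lift V
    (fun t z => ((1 - t : ℝ) : ℂ) • (z.1 i).1 + (t : ℂ) • ((z.1 i).1 l • stdVec l))
    (Continuous.add
      ((Complex.continuous_ofReal.comp (continuous_const.sub continuous_fst)).smul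
        ((continuous_vec V i).comp continuous_snd))
      ((Complex.continuous_ofReal.comp continuous_fst).smul
        (((continuous_entry V i l).comp continuous_snd).smul continuous_const)))
    ?_ ?_ _ _ ?_ ?_
  · intro t _ z h0
    have := congrArg (fun v : EuclideanSpace ℂ (Fin (n + 1)) => v l) h0
    simp only [PiLp.add_apply, PiLp.smul_apply, stdVec_apply, smul_eq_mul, if_true,
      PiLp.zero_apply] at this
    apply h z
    push_cast at this
    linear_combination this
  · intro z z' hz
    obtain ⟨ζ, h1, h2, h3, h4⟩ := lensPi_eq hm hz
    refine ⟨ζ i, h1 i, h2 i, fun t => ?_⟩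
    rw [h4 i l, h3 i]
    module
  · intro z
    refine (lensProj_sphere (m := m) (z.1 i) (fun h0 => h z (by rw [h0]; rfl))).symm.trans ?_
    congr 2
    simp
  · intro z
    simp [axisMap]

/-- Moving along the edge from the `l`-th to the `l'`-th axis. -/
lemma axisMap_homotopic_axisMap {k m n : ℕ} (hm : m ≠ 0) (V : Set (Fin k → Sph n)) (i : Fin k)
    (j l l' : Fin (n + 1)) (h : ∀ z : V, (z.1 i).1 j ≠ 0) :
    (axisMap m V i j l h).HomotopicWith (axisMap m V i j l' h) (FibreConst (lensPi k m n) V) := by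
  refine homotopicWith_of_lift V
    (fun t z => (z.1 i).1 j • (((1 - t : ℝ) : ℂ) • stdVec l + (t : ℂ) • stdVec l'))
    (((continuous_entry V i j).comp continuous_snd).smul (Continuous.add
      ((Complex.continuous_ofReal.comp (continuous_const.sub continuous_fst)).smul
        continuous_const)
      ((Complex.continuous_ofReal.comp continuous_fst).smul continuous_const)))
    ?_ ?_ _ _ ?_ ?_
  · intro t ht z h0
    rw [smul_eq_zero, or_iff_right (h z)] at h0
    have e1 := congrArg (fun v : EuclideanSpace ℂ (Fin (n + 1)) => v l) h0
    have e2 := congrArg (fun v : EuclideanSpace ℂ (Fin (n + 1)) => v l') h0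
    by_cases hl : l = l'
    · subst hl
      simp [stdVec_apply] at e1
    · simp [stdVec_apply, hl, Ne.symm hl] at e1 e2
      simp [e2] at e1
  · intro z z' hz
    obtain ⟨ζ, h1, h2, h3, h4⟩ := lensPi_eq hm hz
    refine ⟨ζ i, h1 i, h2 i, fun t => ?_⟩
    rw [h4 i j]
    module
  · intro z
    simp [axisMap]
  · intro z
    simp [axisMap]

/-- If a continuous branch `φ` of the argument of `(z_{i,l} / z_{i',l'})^m` exists, rotating by
`exp (i t φ / m)` deforms the direction of `z_{i',l'}` into that of `z_{i,l}`, up to `m`-th roots of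
unity. -/
lemma axisMap_homotopic_of_arg {k m n : ℕ} (hm : m ≠ 0) (V : Set (Fin k → Sph n)) (i i' : Fin k)
    (l l' : Fin (n + 1)) (h : ∀ z : V, (z.1 i).1 l ≠ 0) (h' : ∀ z : V, (z.1 i').1 l' ≠ 0)
    (φ : V → ℝ) (hφ : Continuous φ)
    (hinv : ∀ z z' : V, lensPi k m n z = lensPi k m n z' → φ z = φ z')
    (harg : ∀ z : V, (‖((z.1 i).1 l / (z.1 i').1 l') ^ m‖ : ℂ) * Complex.exp (φ z * Complex.I) =
      ((z.1 i).1 l / (z.1 i').1 l') ^ m) :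
    (axisMap m V i' l' l h').HomotopicWith (axisMap m V i l l h)
      (FibreConst (lensPi k m n) V) := by
  refine homotopicWith_of_lift V
    (fun t z => Complex.exp ((t * φ z / m : ℝ) * Complex.I) • ((z.1 i').1 l' • stdVec l))
    (Continuous.smul
      (Complex.continuous_exp.comp ((Complex.continuous_ofReal.comp
        ((continuous_fst.mul (hφ.comp continuous_snd)).div_const _)).mul continuous_const))
      (((continuous_entry V i' l').comp continuous_snd).smul continuous_const)) ?_ ?_ _ _ ?_ ?_
  · intro t ht z h0
    rw [smul_eq_zero, or_iff_right (Complex.exp_ne_zero _)] at h0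
    exact smul_stdVec_ne _ (h' z) h0
  · intro z z' hz
    obtain ⟨ζ, h1, h2, h3, h4⟩ := lensPi_eq hm hz
    refine ⟨ζ i', h1 i', h2 i', fun t => ?_⟩
    rw [h4 i' l', hinv z z' hz]
    module
  · intro z
    simp [axisMap]
  · intro z
    have hm' : (m : ℂ) ≠ 0 := by exact_mod_cast hm
    have hv := h z
    have hu := h' z
    have ha := harg z
    simp only [axisMap, ContinuousMap.coe_mk]
    set u := (z.1 i').1 l'
    set v := (z.1 i).1 l
    -- the ratio of the two vectors is a positive multiple of an `m`-th root of unity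
    refine lensProj_eq _ _ (Complex.exp ((1 * φ z / m : ℝ) * Complex.I) * (v / u)⁻¹) ?_ ?_
    · rw [norm_mul, Complex.norm_exp_ofReal_mul_I, mul_pow, ← Complex.exp_nat_mul]
      have e1 : (m : ℂ) * (((1 * φ z / m : ℝ) : ℂ) * Complex.I) = φ z * Complex.I := by
        push_cast; field_simp
      rw [e1, inv_pow, one_mul, norm_inv]
      push_cast
      rw [inv_pow]
      have hvu : (v / u) ^ m ≠ 0 := pow_ne_zero _ (div_ne_zero hv hu)
      have hn : ((‖v / u‖ : ℝ) : ℂ) ^ m ≠ 0 := by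
        refine pow_ne_zero _ ?_
        exact_mod_cast norm_ne_zero_iff.2 (div_ne_zero hv hu)
      rw [norm_pow] at ha
      push_cast at ha
      field_simp
      rw [← ha]; ring
    · simp only [smul_smul]
      congr 1
      field_simp
      rfl

/-! ### Stratification of `(S^{2n+1})^k` -/

lemma exists_top {n : ℕ} (z : Sph n) :
    ∃ l : Fin (n + 1), z.1 l ≠ 0 ∧ ∀ j, l < j → z.1 j = 0 := by
  classical
  have hne : (Finset.univ.filter fun l => z.1 l ≠ 0).Nonempty := by
    by_contra h
    have h0 : z.1 = 0 := by
      ext l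
      by_contra hl
      exact h ⟨l, by simpa using hl⟩
    have := mem_sphere_zero_iff_norm.1 z.2
    simp [h0] at this
  refine ⟨_, (Finset.mem_filter.1 (Finset.max'_mem _ hne)).2, fun j hj => ?_⟩
  by_contra h
  exact absurd (Finset.le_max' _ j (by simpa using h)) (not_le.2 hj)

/-- The index of the last nonzero coordinate. -/
noncomputable def top {n : ℕ} (z : Sph n) : Fin (n + 1) := (exists_top z).choose

lemma top_ne {n : ℕ} (z : Sph n) : z.1 (top z) ≠ 0 := (exists_top z).choose_spec.1

lemma eq_zero_of_top_lt {n : ℕ} (z : Sph n) {j : Fin (n + 1)} (h : top z < j) : z.1 j = 0 :=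
  (exists_top z).choose_spec.2 j h

/-- The phase `(u / |u|)^m`, an invariant of `u` under `m`-th roots of unity. -/
noncomputable def phase (m : ℕ) (u : ℂ) : ℂ := (u / ‖u‖) ^ m

/-- A defect vanishing when `u = 0`, `v = 0` or `u` and `v` have equal phases. -/
noncomputable def defect (m : ℕ) (u v : ℂ) : ℝ := ‖u ^ m * (‖v‖ : ℂ) ^ m - v ^ m * (‖u‖ : ℂ) ^ m‖

lemma defect_eq_zero {m : ℕ} {u v : ℂ} (hu : u ≠ 0) (hv : v ≠ 0) :
    defect m u v = 0 ↔ phase m u = phase m v := by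
  have hu' : (‖u‖ : ℂ) ^ m ≠ 0 := pow_ne_zero _ (by simpa using hu)
  have hv' : (‖v‖ : ℂ) ^ m ≠ 0 := pow_ne_zero _ (by simpa using hv)
  rw [defect, norm_eq_zero, sub_eq_zero, phase, phase, div_pow, div_pow, div_eq_div_iff hu' hv']

/-- The phases of the last nonzero coordinates of the `k` points. -/
noncomputable def topPhase {k n : ℕ} (m : ℕ) (x : Fin k → Sph n) (i : Fin k) : ℂ :=
  phase m ((x i).1 (top (x i)))

/-- The labels of the strata: the positions of the last nonzero coordinates and the relation of
having equal phases. -/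
abbrev Label (k n : ℕ) := (Fin k → Fin (n + 1)) × (Fin k → Fin k → Prop)

/-- The label of the stratum containing `x`. -/
noncomputable def cls {k n : ℕ} (m : ℕ) (x : Fin k → Sph n) : Label k n :=
  (fun i => top (x i), fun i i' => topPhase m x i = topPhase m x i')

open scoped Classical in
/-- The dimension of the stratum of `x` modulo the diagonal circle action: twice the sum of the
positions, plus the number of distinct phases, minus one. -/
noncomputable def rk {k n : ℕ} (m : ℕ) (x : Fin k → Sph n) : ℕ :=
  ∑ i, 2 * (top (x i) : ℕ) + (Finset.univ.image (topPhase m x)).card - 1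

open scoped Classical in
/-- A function vanishing on the stratum labelled `b`; if this stratum is nonempty, the function
vanishes nowhere on the other strata of the same rank. -/
noncomputable def strataFun {k n : ℕ} (m : ℕ) (b : Label k n) (x : Fin k → Sph n) : ℝ :=
  (∑ i, ∑ j, if b.1 i < j then ‖(x i).1 j‖ else 0) +
    ∑ i, ∑ i', if b.2 i i' then defect m ((x i).1 (b.1 i)) ((x i').1 (b.1 i')) else 0

lemma continuous_coord {k n : ℕ} (i : Fin k) (l : Fin (n + 1)) :
    Continuous fun x : Fin k → Sph n => (x i).1 l :=
  (by fun_prop : Continuous fun v : EuclideanSpace ℂ (Fin (n + 1)) => v l).comp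
    (continuous_subtype_val.comp (continuous_apply i))

lemma continuous_strataFun {k n : ℕ} (m : ℕ) (b : Label k n) :
    Continuous (strataFun m b) := by
  unfold strataFun
  refine Continuous.add ?_ ?_
  · refine continuous_finsetSum _ fun i _ => continuous_finsetSum _ fun j _ => ?_
    split_ifs
    · exact (continuous_coord i j).norm
    · exact continuous_const
  · refine continuous_finsetSum _ fun i _ => continuous_finsetSum _ fun j _ => ?_
    split_ifs
    · have h1 := continuous_coord (n := n) i (b.1 i)
      have h2 := continuous_coord (n := n) j (b.1 j)
      exact (((h1.pow m).mul ((Complex.continuous_ofReal.comp h2.norm).pow m)).sub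
        ((h2.pow m).mul ((Complex.continuous_ofReal.comp h1.norm).pow m))).norm
    · exact continuous_const

lemma strataFun_terms_nonneg {k n : ℕ} (m : ℕ) (b : Label k n) (x : Fin k → Sph n)
    [∀ i j, Decidable (b.1 i < j)] [∀ i j, Decidable (b.2 i j)] :
    (∀ i j, 0 ≤ if b.1 i < j then ‖(x i).1 j‖ else 0) ∧
    ∀ i i', 0 ≤ if b.2 i i' then defect m ((x i).1 (b.1 i)) ((x i').1 (b.1 i')) else 0 := by
  constructor
  · intro i j; split_ifs
    · exact norm_nonneg _
    · exact le_rfl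
  · intro i j; split_ifs
    · exact norm_nonneg _
    · exact le_rfl

lemma strataFun_nonneg {k n : ℕ} (m : ℕ) (b : Label k n) (x : Fin k → Sph n) :
    0 ≤ strataFun m b x := by
  classical
  obtain ⟨h1, h2⟩ := strataFun_terms_nonneg m b x
  exact add_nonneg (Finset.sum_nonneg fun i _ => Finset.sum_nonneg fun j _ => h1 i j)
    (Finset.sum_nonneg fun i _ => Finset.sum_nonneg fun j _ => h2 i j)

lemma strataFun_eq_zero {k n : ℕ} (m : ℕ) (b : Label k n) (x : Fin k → Sph n) :
    strataFun m b x = 0 ↔ (∀ i j, b.1 i < j → (x i).1 j = 0) ∧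
      ∀ i i', b.2 i i' → defect m ((x i).1 (b.1 i)) ((x i').1 (b.1 i')) = 0 := by
  classical
  obtain ⟨h1, h2⟩ := strataFun_terms_nonneg m b x
  rw [strataFun, add_eq_zero_iff_of_nonneg
    (Finset.sum_nonneg fun i _ => Finset.sum_nonneg fun j _ => h1 i j)
    (Finset.sum_nonneg fun i _ => Finset.sum_nonneg fun j _ => h2 i j)]
  simp only [Finset.sum_eq_zero_iff_of_nonneg (fun i _ => Finset.sum_nonneg fun j _ => h1 i j),
    Finset.sum_eq_zero_iff_of_nonneg (fun i _ => Finset.sum_nonneg fun j _ => h2 i j),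
    Finset.sum_eq_zero_iff_of_nonneg (fun j _ => h1 _ j),
    Finset.sum_eq_zero_iff_of_nonneg (fun j _ => h2 _ j), Finset.mem_univ, true_implies,
    ite_eq_right_iff, norm_eq_zero]

lemma strataFun_cls {k n : ℕ} (m : ℕ) (x : Fin k → Sph n) : strataFun m (cls m x) x = 0 := by
  rw [strataFun_eq_zero]
  exact ⟨fun i j h => eq_zero_of_top_lt _ h,
    fun i i' h => (defect_eq_zero (top_ne _) (top_ne _)).2 h⟩

/-- The frontier of a stratum meets only strata of smaller rank: when the last nonzero coordinate of
some points drops, the number of distinct phases grows by at most the number of these points, which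
the factor `2` in the rank outweighs; otherwise phases can only collide. -/
lemma cls_eq_of_strataFun {k m n : ℕ} (x y : Fin k → Sph n)
    (h : strataFun m (cls m y) x = 0) (hr : rk m x = rk m y) : cls m x = cls m y := by
  classical
  rcases Nat.eq_zero_or_pos k with rfl | hk
  · exact Prod.ext (Subsingleton.elim _ _) (Subsingleton.elim _ _)
  obtain ⟨h1, h2⟩ := (strataFun_eq_zero _ _ _).1 h
  have hle : ∀ i, top (x i) ≤ top (y i) := by
    intro i
    by_contra hlt
    exact top_ne _ (h1 i _ (not_le.1 hlt))
  have himp : ∀ i i', top (x i) = top (y i) → top (x i') = top (y i') →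
      topPhase m y i = topPhase m y i' → topPhase m x i = topPhase m x i' := by
    intro i i' e e' hp
    have := h2 i i' hp
    simp only [cls, ← e, ← e'] at this
    exact (defect_eq_zero (top_ne _) (top_ne _)).1 this
  let P : Finset (Fin k) := Finset.univ.filter fun i => top (x i) = top (y i)
  let J : Finset (Fin k) := Finset.univ.filter fun i => ¬ top (x i) = top (y i)
  have hPJ : P ∪ J = Finset.univ := Finset.filter_union_filter_not_eq _ _
  have c1 : (Finset.univ.image (topPhase m x)).card ≤
      (Finset.univ.image (topPhase m y)).card + J.card := by
    rw [← hPJ, Finset.image_union]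
    refine (Finset.card_union_le _ _).trans (add_le_add ?_ Finset.card_image_le)
    refine (card_image_le_of_imp P _ (topPhase m y) ?_).trans
      (Finset.card_le_card (Finset.image_subset_image (by rw [hPJ]; exact Finset.subset_univ _)))
    intro i hi j hj
    exact himp i j (Finset.mem_filter.1 hi).2 (Finset.mem_filter.1 hj).2
  have c2 : ∑ i, 2 * (top (x i) : ℕ) + 2 * J.card ≤ ∑ i, 2 * (top (y i) : ℕ) := by
    have : ∑ i, (2 * (top (x i) : ℕ) + if ¬ top (x i) = top (y i) then 2 else 0) ≤
        ∑ i, 2 * (top (y i) : ℕ) := by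
      refine Finset.sum_le_sum fun i _ => ?_
      have h3 : (top (x i) : ℕ) ≤ top (y i) := hle i
      split_ifs with hc
      · omega
      · have : (top (x i) : ℕ) ≠ top (y i) := fun e => hc (Fin.ext e)
        omega
    rw [Finset.sum_add_distrib, ← Finset.sum_filter, Finset.sum_const, smul_eq_mul] at this
    linarith
  have p1 : 0 < (Finset.univ.image (topPhase m x)).card :=
    Finset.card_pos.2 ⟨_, Finset.mem_image_of_mem _ (Finset.mem_univ ⟨0, hk⟩)⟩
  have p2 : 0 < (Finset.univ.image (topPhase m y)).card :=
    Finset.card_pos.2 ⟨_, Finset.mem_image_of_mem _ (Finset.mem_univ ⟨0, hk⟩)⟩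
  unfold rk at hr
  have hJ : J.card = 0 := by omega
  have htop : ∀ i, top (x i) = top (y i) := by
    intro i
    by_contra hc
    have : i ∈ J := Finset.mem_filter.2 ⟨Finset.mem_univ _, hc⟩
    rw [Finset.card_eq_zero.1 hJ] at this
    exact absurd this (Finset.notMem_empty _)
  have hs : ∑ i, 2 * (top (x i) : ℕ) = ∑ i, 2 * (top (y i) : ℕ) := by simp only [htop]
  have himp' : ∀ i i', topPhase m y i = topPhase m y i' → topPhase m x i = topPhase m x i' :=
    fun i i' => himp i i' (htop i) (htop i')
  have hback := imp_of_card_image_le (topPhase m x) (topPhase m y) himp' (by omega)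
  refine Prod.ext (funext htop) ?_
  funext i i'
  exact propext ⟨hback i i', himp' i i'⟩

lemma rk_lt {k n : ℕ} (m : ℕ) (hk : 0 < k) (x : Fin k → Sph n) : rk m x < k * (2 * n + 1) := by
  classical
  have h1 : ∑ i, 2 * (top (x i) : ℕ) ≤ ∑ _i : Fin k, 2 * n :=
    Finset.sum_le_sum fun i _ => by have := (top (x i)).2; omega
  have h2 : (Finset.univ.image (topPhase m x)).card ≤ k := by
    simpa using Finset.card_image_le (s := Finset.univ) (f := topPhase m x)
  rw [Finset.sum_const, Finset.card_univ, Fintype.card_fin, smul_eq_mul] at h1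
  unfold rk
  have : k * (2 * n + 1) = k * (2 * n) + k := by ring
  omega

lemma strataFun_inv {k m n : ℕ} (hm : m ≠ 0) (b : Label k n) {z z' : Fin k → Sph n}
    (h : lensPi k m n z = lensPi k m n z') : strataFun m b z = strataFun m b z' := by
  classical
  obtain ⟨ζ, h1, h2, -, h4⟩ := lensPi_eq hm h
  unfold strataFun
  congr 1
  · refine Finset.sum_congr rfl fun i _ => Finset.sum_congr rfl fun j _ => ?_
    rw [h4, norm_mul, h2, one_mul]
  · refine Finset.sum_congr rfl fun i _ => Finset.sum_congr rfl fun j _ => ?_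
    simp only [defect, h4, norm_mul, h2, one_mul, mul_pow, h1]

/-! ### Motion planning near a stratum -/

/-- The ratio `(x_{i,l} / x_{i',l'})^m` comparing the phases of two entries. -/
noncomputable def ratio {k n : ℕ} (m : ℕ) (b : Label k n) (i i' : Fin k) (x : Fin k → Sph n) : ℂ :=
  ((x i).1 (b.1 i) / (x i').1 (b.1 i')) ^ m

open scoped Classical in
/-- The neighbourhood of the stratum labelled `b` where the entries at the prescribed positions do
not vanish, two phases which agree on the stratum are not opposite, and two phases which differ on
the stratum are not equal. -/
def nbhd {k n : ℕ} (m : ℕ) (b : Label k n) : Set (Fin k → Sph n) :=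
  ⋂ i, ⋂ i', {x | (x i').1 (b.1 i') ≠ 0} ∩
    ratio m b i i' ⁻¹' (if b.2 i i' then Complex.slitPlane else Neg.neg ⁻¹' Complex.slitPlane)

lemma continuousOn_ratio {k n : ℕ} (m : ℕ) (b : Label k n) (i i' : Fin k) :
    ContinuousOn (ratio m b i i') {x | (x i').1 (b.1 i') ≠ 0} :=
  ((continuous_coord i _).continuousOn.div (continuous_coord i' _).continuousOn
    fun _ hx => hx).pow m

lemma isOpen_nbhd {k n : ℕ} (m : ℕ) (b : Label k n) : IsOpen (nbhd m b) := by
  classical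
  refine isOpen_iInter_of_finite fun i => isOpen_iInter_of_finite fun i' => ?_
  refine (continuousOn_ratio m b i i').isOpen_inter_preimage ?_ ?_
  · exact isOpen_ne_fun (continuous_coord i' _) continuous_const
  · split_ifs
    · exact Complex.isOpen_slitPlane
    · exact Complex.isOpen_slitPlane.preimage continuous_neg

lemma mem_nbhd_cls {k n : ℕ} (m : ℕ) (x : Fin k → Sph n) : x ∈ nbhd m (cls m x) := by
  classical
  simp only [nbhd, Set.mem_iInter]
  intro i i'
  refine ⟨top_ne _, ?_⟩
  have hu := top_ne (x i)
  have hv := top_ne (x i')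
  have hr : ratio m (cls m x) i i' = fun x' : Fin k → Sph n =>
    ((x' i).1 (top (x i)) / (x' i').1 (top (x i'))) ^ m := rfl
  have hc : (cls m x).2 i i' ↔ phase m ((x i).1 (top (x i))) = phase m ((x i').1 (top (x i'))) :=
    Iff.rfl
  rw [hr, Set.mem_preimage, hc]
  simp only
  set u := (x i).1 (top (x i))
  set v := (x i').1 (top (x i'))
  have hu' : (‖u‖ : ℂ) ^ m ≠ 0 := pow_ne_zero _ (by simpa using hu)
  have hv' : (‖v‖ : ℂ) ^ m ≠ 0 := pow_ne_zero _ (by simpa using hv)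
  have huv : (0 : ℝ) < (‖u‖ / ‖v‖) ^ m := by
    have := norm_pos_iff.2 hu
    have := norm_pos_iff.2 hv
    positivity
  have hph : phase m u = phase m v ↔ (u / v) ^ m = (((‖u‖ / ‖v‖) ^ m : ℝ) : ℂ) := by
    have hvm : v ^ m ≠ 0 := pow_ne_zero _ hv
    rw [phase, phase]
    push_cast
    rw [div_pow, div_pow, div_pow, div_pow, div_eq_div_iff hu' hv', div_eq_div_iff hvm hv']
    constructor <;> intro h <;> linear_combination h
  split_ifs with hp
  · rw [hph.1 hp]
    exact Complex.ofReal_mem_slitPlane.2 huv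
  · rw [Set.mem_preimage]
    by_contra hns
    apply hp
    rw [hph]
    -- outside the slit plane the negated ratio is a nonpositive real, so the ratio is its norm
    obtain ⟨hre, him⟩ := by
      simpa only [Complex.mem_slitPlane_iff, not_or, not_lt, not_not] using hns
    have h1 : (u / v) ^ m = (((u / v) ^ m).re : ℂ) := by
      apply Complex.ext <;> simp
      simpa using him
    have h2 : 0 ≤ ((u / v) ^ m).re := by simpa using hre
    have h3 : ‖(u / v) ^ m‖ = ((u / v) ^ m).re := by
      rw [h1]; simp [abs_of_nonneg h2]
    rw [norm_pow, norm_div] at h3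
    rw [h3]; exact h1

/-- All coordinates are homotopic over the neighbourhood of a stratum. -/
lemma coordMap_homotopic {k m n : ℕ} (hm : m ≠ 0) (b : Label k n) (V : Set (Fin k → Sph n))
    (hV : V ⊆ nbhd m b) (i i' : Fin k) :
    (coordMap k m n V i).HomotopicWith (coordMap k m n V i') (FibreConst (lensPi k m n) V) := by
  classical
  have hmem : ∀ z : V, ∀ i i', (z.1 i').1 (b.1 i') ≠ 0 ∧ ratio m b i i' z.1 ∈
      (if b.2 i i' then Complex.slitPlane else Neg.neg ⁻¹' Complex.slitPlane) := by
    intro z i i'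
    have := hV z.2
    simp only [nbhd, Set.mem_iInter] at this
    exact this i i'
  have hne : ∀ i, ∀ z : V, (z.1 i).1 (b.1 i) ≠ 0 := fun i z => (hmem z i i).1
  have hrc : Continuous fun z : V => ratio m b i i' z.1 :=
    (((continuous_entry V i _).div (continuous_entry V i' _) (hne i')).pow m)
  have hrinv : ∀ z z' : V, lensPi k m n z = lensPi k m n z' →
      ratio m b i i' z.1 = ratio m b i i' z'.1 := by
    intro z z' hz
    obtain ⟨ζ, h1, -, -, h4⟩ := lensPi_eq hm hz
    simp only [ratio, h4, div_pow, mul_pow, h1, one_mul]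
  obtain ⟨φ, hφ, hφi, hφa⟩ : ∃ φ : V → ℝ, Continuous φ ∧
      (∀ z z' : V, lensPi k m n z = lensPi k m n z' → φ z = φ z') ∧
      ∀ z : V, (‖ratio m b i i' z.1‖ : ℂ) * Complex.exp (φ z * Complex.I) =
        ratio m b i i' z.1 := by
    by_cases hR : b.2 i i'
    · refine ⟨fun z => Complex.arg (ratio m b i i' z.1), ?_, ?_, ?_⟩
      · rw [continuous_iff_continuousAt]
        intro z
        have := (hmem z i i').2
        rw [if_pos hR] at this
        exact ContinuousAt.comp (f := fun z : V => ratio m b i i' z.1)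
          (Complex.continuousAt_arg this) hrc.continuousAt
      · intro z z' hz
        simp only [hrinv z z' hz]
      · intro z
        exact Complex.norm_mul_exp_arg_mul_I _
    · refine ⟨fun z => Complex.arg (-ratio m b i i' z.1) + Real.pi, ?_, ?_, ?_⟩
      · rw [continuous_iff_continuousAt]
        intro z
        have := (hmem z i i').2
        rw [if_neg hR] at this
        exact (ContinuousAt.comp (f := fun z : V => -ratio m b i i' z.1)
          (Complex.continuousAt_arg this) hrc.neg.continuousAt).add continuousAt_const
      · intro z z' hz
        simp only [hrinv z z' hz]
      · intro z
        have := Complex.norm_mul_exp_arg_mul_I (-ratio m b i i' z.1)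
        rw [norm_neg] at this
        push_cast
        rw [add_mul, Complex.exp_add, Complex.exp_pi_mul_I]
        linear_combination -this
  have a1 := coordMap_homotopic_axisMap hm V i (b.1 i) (hne i)
  have a2 := axisMap_homotopic_of_arg hm V i i' (b.1 i) (b.1 i') (hne i) (hne i') φ hφ hφi hφa
  have a3 := axisMap_homotopic_axisMap hm V i' (b.1 i') (b.1 i') (b.1 i) (hne i')
  have a4 := coordMap_homotopic_axisMap hm V i' (b.1 i') (hne i')
  exact a1.trans (a2.symm.trans (a3.symm.trans a4.symm))

/-- `TC_k(L^{2n+1}_m) ≤ k(2n+1)`: the `k`-fold product of the lens space can be covered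
by `k(2n+1)` open sets, each admitting a continuous section of `π_k`. -/
theorem stmt13 (k m n : ℕ) (hk : 2 ≤ k) (hm : 2 ≤ m) :
    TCCoverAt (LensSpace m n) k (k * (2 * n + 1)) := by
  have hm0 : m ≠ 0 := by omega
  have hq := isOpenQuotientMap_lensPi hm0 k n
  obtain ⟨V, hVo, hVU, hVc, hVd⟩ := exists_separated (cls m) (rk m) (strataFun (k := k) (n := n) m)
    (continuous_strataFun m) (strataFun_nonneg m) (strataFun_cls m) cls_eq_of_strataFun (nbhd m)
    (isOpen_nbhd m) (mem_nbhd_cls m)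
  have hWo : ∀ r b, IsOpen (lensPi k m n '' V r b) := fun r b => hq.isOpenMap _ (hVo r b)
  refine ⟨fun r => ⋃ b, lensPi k m n '' V r b, fun r => isOpen_iUnion (hWo r), ?_, fun r => ?_⟩
  · refine Set.eq_univ_of_forall fun u => ?_
    obtain ⟨z, rfl⟩ := hq.surjective u
    exact Set.mem_iUnion.2 ⟨⟨rk m z, rk_lt m (by omega) z⟩, Set.mem_iUnion.2
      ⟨cls m z, Set.mem_image_of_mem _ (hVc z)⟩⟩
  · refine glue_planners _ (hWo r) ?_ fun b => ?_
    · rintro b b' _ ⟨z, hz, rfl⟩ ⟨z', hz', h⟩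
      exact hVd _ _ _ z z' hz hz' fun c => strataFun_inv hm0 c h.symm
    · exact exists_planner hk _ hq (V r b) (hVo r b) (coordMap k m n _) (fun _ _ => rfl)
        (coordMap_homotopic hm0 b _ (hVU r b))
end
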